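/- Let Ω, Ω' be bounded open subsets of ℝⁿ and let c satisfy conditions A0, A1, A2. Let φ be c-convex on Ω and let (φ_k) be a sequence of c-convex potentials converging to φ uniformly on compact subsets of Ω. If x₀ ∈ Ω, y ∈ Ω' and p = −∇ₓc(x₀,y) ∈ ∂φ(x₀), then there exist sequences x_k → x₀ in Ω and y_k → y in cl(Ω') such that p_k := −∇ₓc(x_k,y_k) ∈ ∂φ_k(x_k) for all large k; in particular p_k → p. -/

import Mathlib

open Set Filter Topology MeasureTheory Metric Bornology
open scoped RealInnerProductSpace ENNReal NNReal Topology

noncomputable section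

/-- Euclidean space ℝⁿ. -/
abbrev Euc (n : ℕ) := EuclideanSpace ℝ (Fin n)

variable {n : ℕ}

/-- Gradient of the cost in the first variable: ∇ₓc(x,y). -/
noncomputable def gradx (c : Euc n → Euc n → ℝ) (x y : Euc n) : Euc n :=
  gradient (fun x' => c x' y) x

/-- Gradient of the cost in the second variable: ∇_y c(x,y). -/
noncomputable def grady (c : Euc n → Euc n → ℝ) (x y : Euc n) : Euc n :=
  gradient (fun y' => c x y') y

/-- Condition A0: the cost is C⁴ on a neighborhood of cl(Ω) × cl(Ω'). -/
def CondA0 (c : Euc n → Euc n → ℝ) (Ω Ω' : Set (Euc n)) : Prop :=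
  ∃ U : Set (Euc n × Euc n), IsOpen U ∧ closure Ω ×ˢ closure Ω' ⊆ U ∧
    ContDiffOn ℝ 4 (fun p => c p.1 p.2) U

/-- Condition A1: for every x ∈ cl(Ω), y ↦ −∇ₓc(x,y) is injective on cl(Ω') with convex image. -/
def CondA1 (c : Euc n → Euc n → ℝ) (Ω Ω' : Set (Euc n)) : Prop :=
  ∀ x ∈ closure Ω, Set.InjOn (fun y => -gradx c x y) (closure Ω') ∧
    Convex ℝ ((fun y => -gradx c x y) '' closure Ω')

/-- Condition A2: det D²ₓᵧ c (x,y) ≠ 0 on cl(Ω) × cl(Ω'). -/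
def CondA2 (c : Euc n → Euc n → ℝ) (Ω Ω' : Set (Euc n)) : Prop :=
  ∀ x ∈ closure Ω, ∀ y ∈ closure Ω',
    LinearMap.det ((fderiv ℝ (fun y' => gradx c x y') y : Euc n →L[ℝ] Euc n) :
      Euc n →ₗ[ℝ] Euc n) ≠ 0

/-- c-transform φᶜ(y) = sup_{x ∈ Ω} (−c(x,y) − φ(x)). -/
def ctransform (c : Euc n → Euc n → ℝ) (Ω : Set (Euc n)) (φ : Euc n → ℝ) (y : Euc n) : ℝ :=
  sSup ((fun x => -c x y - φ x) '' Ω)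

/-- c*-transform ψᶜ*(x) = sup_{y ∈ Ω'} (−c(x,y) − ψ(y)). -/
def cstarTransform (c : Euc n → Euc n → ℝ) (Ω' : Set (Euc n)) (ψ : Euc n → ℝ) (x : Euc n) : ℝ :=
  sSup ((fun y => -c x y - ψ y) '' Ω')

/-- φ is c-convex on Ω: it is the c*-transform of some lower semicontinuous ψ on Ω'. -/
def CConvexOn (c : Euc n → Euc n → ℝ) (Ω Ω' : Set (Euc n)) (φ : Euc n → ℝ) : Prop :=
  ∃ ψ : Euc n → ℝ, LowerSemicontinuousOn ψ Ω' ∧ ∀ x ∈ Ω, φ x = cstarTransform c Ω' ψ x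

/-- The contact set G_φ(x) = { y ∈ Ω' : φ(x) + φᶜ(y) = −c(x,y) }. -/
def contactSet (c : Euc n → Euc n → ℝ) (Ω Ω' : Set (Euc n)) (φ : Euc n → ℝ) (x : Euc n) :
    Set (Euc n) :=
  {y | y ∈ Ω' ∧ φ x + ctransform c Ω φ y = -c x y}

/-- The subdifferential ∂φ(x) (relative to Ω): p with φ(x') ≥ φ(x) + p·(x'−x) + o(|x'−x|). -/
def subdiff (Ω : Set (Euc n)) (φ : Euc n → ℝ) (x : Euc n) : Set (Euc n) :=
  {p | ∀ ε > (0:ℝ), ∀ᶠ x' in 𝓝[Ω] x, φ x + ⟪p, x' - x⟫ - ε * ‖x' - x‖ ≤ φ x'}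

/-- The c-subdifferential ∂ᶜφ(x) = { −∇ₓc(x,y) : y ∈ G_φ(x) }. -/
def csubdiff (c : Euc n → Euc n → ℝ) (Ω Ω' : Set (Euc n)) (φ : Euc n → ℝ) (x : Euc n) :
    Set (Euc n) :=
  (fun y => -gradx c x y) '' contactSet c Ω Ω' φ x

/-- S is c-convex with respect to the point x: −∇ₓc(x,S) is convex. -/
def CConvexSetWrt (c : Euc n → Euc n → ℝ) (x : Euc n) (S : Set (Euc n)) : Prop :=
  Convex ℝ ((fun y => -gradx c x y) '' S)

/-- S is c-convex with respect to the set Ω. -/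
def CConvexSet (c : Euc n → Euc n → ℝ) (Ω S : Set (Euc n)) : Prop :=
  ∀ x ∈ Ω, CConvexSetWrt c x S

/-- T is a c-exponential map for c on Ω × Ω': T x (−∇ₓc(x,y)) = y. -/
def IsCExp (c : Euc n → Euc n → ℝ) (Ω Ω' : Set (Euc n)) (T : Euc n → Euc n → Euc n) : Prop :=
  ∀ x ∈ Ω, ∀ y ∈ Ω', T x (-gradx c x y) = y

/-- The point y_θ of the c-segment [y₀,y₁]ₓ with respect to x. -/
def cseg (c : Euc n → Euc n → ℝ) (T : Euc n → Euc n → Euc n) (x y₀ y₁ : Euc n) (θ : ℝ) :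
    Euc n :=
  T x ((1 - θ) • (-gradx c x y₀) + θ • (-gradx c x y₁))

/-- The cost-sectional curvature 𝔖_c(x₀,y₀)(ξ,ν). -/
def costSecCurv (c : Euc n → Euc n → ℝ) (T : Euc n → Euc n → Euc n) (x₀ y₀ ξ ν : Euc n) : ℝ :=
  iteratedDeriv 2 (fun s : ℝ => iteratedDeriv 2
    (fun t : ℝ => -c (x₀ + t • ξ) (T x₀ (-gradx c x₀ y₀ + s • ν))) (0:ℝ)) (0:ℝ)

/-- Condition As (with constant C₀; C₀ = 0 gives condition Aw). -/
def CondAs (c : Euc n → Euc n → ℝ) (T : Euc n → Euc n → Euc n) (Ω Ω' : Set (Euc n))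
    (C₀ : ℝ) : Prop :=
  ∀ x ∈ Ω, ∀ y ∈ Ω', ∀ ξ ν : Euc n, ⟪ξ, ν⟫ = 0 →
    C₀ * ‖ξ‖ ^ 2 * ‖ν‖ ^ 2 ≤ costSecCurv c T x y ξ ν

/-- G_{φ#}μ₀ = μ₁ : some Borel selection of G_φ pushes μ₀ forward to μ₁. -/
def GradPush (c : Euc n → Euc n → ℝ) (Ω Ω' : Set (Euc n)) (φ : Euc n → ℝ)
    (μ₀ μ₁ : Measure (Euc n)) : Prop :=
  ∃ Tm : Euc n → Euc n, Measurable Tm ∧ (∀ᵐ x ∂μ₀, Tm x ∈ contactSet c Ω Ω' φ x) ∧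
    μ₀.map Tm = μ₁

/-- Ω' is uniformly strictly c-convex with respect to Ω. -/
def UnifStrictCConvex (c : Euc n → Euc n → ℝ) (Ω Ω' : Set (Euc n)) : Prop :=
  ∃ δ > (0:ℝ), ∀ x ∈ Ω, ∀ p ∈ (fun y => -gradx c x y) '' Ω',
    ∀ q ∈ (fun y => -gradx c x y) '' Ω',
      closedBall (midpoint ℝ p q) (δ * ‖p - q‖ ^ 2) ⊆ (fun y => -gradx c x y) '' Ω'

/-- Ω is uniformly strictly c*-convex with respect to Ω' (the dual statement). -/
def UnifStrictCstarConvex (c : Euc n → Euc n → ℝ) (Ω Ω' : Set (Euc n)) : Prop :=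
  ∃ δ > (0:ℝ), ∀ y ∈ Ω', ∀ p ∈ (fun x => -grady c x y) '' Ω,
    ∀ q ∈ (fun x => -grady c x y) '' Ω,
      closedBall (midpoint ℝ p q) (δ * ‖p - q‖ ^ 2) ⊆ (fun x => -grady c x y) '' Ω

/-- Ω has smooth boundary: it is the sublevel set of a smooth function with
nonvanishing gradient on the boundary. -/
def SmoothBoundary (Ω : Set (Euc n)) : Prop :=
  ∃ f : Euc n → ℝ, ContDiff ℝ (⊤ : ℕ∞) f ∧ Ω = f ⁻¹' Iio 0 ∧ ∀ x ∈ frontier Ω, gradient f x ≠ 0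

end

/-!
The argument is a perturbation of a strict minimum. If `p ∈ ∂φ(x₀)`, then on a small sphere of
radius `r` around `x₀` the function `φ - ⟪p, · - x₀⟫` lies above `φ x₀ - o(r)`. Adding a penalty
`a ‖· - x₀‖²` with `a` of order `ε / r` makes the values on the sphere exceed the value at the
centre by an amount of order `ε r`, and this strict inequality survives in `φ_k` for large `k`.
Hence the penalized `φ_k` has a local minimum `x` inside the ball, and `p - 2a (x - x₀)`, which
is `ε`-close to `p`, is a subgradient of `φ_k` there. Since `D²ₓᵧc(x₀, y)` is invertible, the
map `(x, z) ↦ (x, -∇ₓc(x, z))` is open at `(x₀, y)`, so every pair `(x, q)` close to `(x₀, p)`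
has the form `(x, -∇ₓc(x, z))` with `z` close to `y`.
-/

theorem exists_tendsto_eventually_mem {X : Type*} [PseudoMetricSpace X] {S : ℕ → Set X} {z : X}
    (h : ∀ V ∈ 𝓝 z, ∀ᶠ k in atTop, (S k ∩ V).Nonempty) :
    ∃ w : ℕ → X, Tendsto w atTop (𝓝 z) ∧ (∀ k, w k ∈ insert z (S k)) ∧
      ∀ᶠ k in atTop, w k ∈ S k := by
  have exists_near (k : ℕ) : ∃ w ∈ insert z (S k), ((S k).Nonempty → w ∈ S k) ∧
      dist w z ≤ infDist z (S k) + 1 / ((k : ℝ) + 1) := by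
    have hpos : (0 : ℝ) < 1 / ((k : ℝ) + 1) := by positivity
    rcases (S k).eq_empty_or_nonempty with hempty | hne
    · exact ⟨z, mem_insert z _, fun hne => absurd hempty hne.ne_empty,
        by rw [dist_self]; exact add_nonneg infDist_nonneg hpos.le⟩
    · obtain ⟨w, hw, hdist⟩ := (infDist_lt_iff hne).1 (lt_add_of_pos_right _ hpos)
      exact ⟨w, mem_insert_of_mem z hw, fun _ => hw, by rw [dist_comm]; exact hdist.le⟩
  choose w hw hwS hdist using exists_near
  have tendsto_infDist : Tendsto (fun k => infDist z (S k)) atTop (𝓝 0) := by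
    refine Metric.tendsto_nhds.2 fun ε hε => ?_
    filter_upwards [h (ball z ε) (ball_mem_nhds z hε)] with k ⟨v, hvS, hvz⟩
    rw [Real.dist_0_eq_abs, abs_of_nonneg infDist_nonneg]
    exact (infDist_le_dist_of_mem hvS).trans_lt (mem_ball'.1 hvz)
  have tendsto_bound :
      Tendsto (fun k : ℕ => infDist z (S k) + 1 / ((k : ℝ) + 1)) atTop (𝓝 0) := by
    simpa only [add_zero] using tendsto_infDist.add tendsto_one_div_add_atTop_nhds_zero_nat
  refine ⟨w, tendsto_iff_dist_tendsto_zero.2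
    (squeeze_zero (fun _ => dist_nonneg) hdist tendsto_bound), hw, ?_⟩
  filter_upwards [h univ univ_mem] with k hk
  exact hwS k hk.left

theorem exists_isLocalMin_mem_ball_of_lowerSemicontinuousOn {X : Type*} [PseudoMetricSpace X]
    [ProperSpace X] {u : X → ℝ} {x₀ : X} {r : ℝ} (hr : 0 < r)
    (hu : LowerSemicontinuousOn u (closedBall x₀ r)) (hsphere : ∀ x ∈ sphere x₀ r, u x₀ < u x) :
    ∃ x ∈ ball x₀ r, IsLocalMin u x := by
  have hx₀ : x₀ ∈ closedBall x₀ r := mem_closedBall_self hr.le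
  obtain ⟨x, hx, hmin⟩ := hu.exists_isMinOn ⟨x₀, hx₀⟩ (isCompact_closedBall x₀ r)
  have hxr : x ∈ ball x₀ r :=
    mem_ball.2 (lt_of_le_of_ne hx fun heq => (hsphere x heq).not_ge (hmin hx₀))
  exact ⟨x, hxr, hmin.isLocalMin (closedBall_mem_nhds_of_mem hxr)⟩

theorem hasGradientAt_const_mul_norm_sub_sq_sub_inner {E : Type*} [NormedAddCommGroup E]
    [InnerProductSpace ℝ E] [CompleteSpace E] (a : ℝ) (p x₀ x : E) :
    HasGradientAt (fun x' => a * ‖x' - x₀‖ ^ 2 - ⟪p, x' - x₀⟫) ((2 * a) • (x - x₀) - p) x := by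
  rw [hasGradientAt_iff_hasFDerivAt]
  have hsub : HasFDerivAt (fun x' => x' - x₀) (ContinuousLinearMap.id ℝ E) x :=
    (hasFDerivAt_id x).sub_const x₀
  refine ((hsub.norm_sq.const_mul a).sub ((innerSL ℝ p).hasFDerivAt.comp x hsub)).congr_fderiv ?_
  ext v
  simp
  ring

theorem bddAbove_image_add_iff_of_abs_le {α : Type*} {s : Set α} {f g : α → ℝ} {M : ℝ}
    (hf : ∀ a ∈ s, |f a| ≤ M) :
    BddAbove ((fun a => f a + g a) '' s) ↔ BddAbove (g '' s) := by
  simp only [bddAbove_def, forall_mem_image]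
  refine ⟨fun ⟨B, hB⟩ => ⟨B + M, fun a ha => ?_⟩, fun ⟨B, hB⟩ => ⟨B + M, fun a ha => ?_⟩⟩
  · linarith [hB ha, neg_abs_le (f a), hf a ha]
  · linarith [hB ha, le_abs_self (f a), hf a ha]

theorem map_nhds_prodMk_fst_of_surjective {𝕜 E F G : Type*} [NontriviallyNormedField 𝕜]
    [NormedAddCommGroup E] [NormedSpace 𝕜 E] [CompleteSpace E]
    [NormedAddCommGroup F] [NormedSpace 𝕜 F] [CompleteSpace F]
    [NormedAddCommGroup G] [NormedSpace 𝕜 G] [CompleteSpace G]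
    {f : E × F → G} {f' : E × F →L[𝕜] G} {z : E × F} (hf : HasStrictFDerivAt f f' z)
    (hsurj : Function.Surjective (f'.comp (ContinuousLinearMap.inr 𝕜 E F))) :
    map (fun w => (w.1, f w)) (𝓝 z) = 𝓝 (z.1, f z) := by
  refine (hasStrictFDerivAt_fst.prodMk hf).map_nhds_eq_of_surj (LinearMap.range_eq_top.2 ?_)
  rintro ⟨a, b⟩
  obtain ⟨v, hv⟩ := hsurj (b - f' (a, 0))
  have hb : f' (a, v) = b := by
    calc f' (a, v) = f' (a, 0) + f' (0, v) := by rw [← map_add]; simp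
      _ = f' (a, 0) + (b - f' (a, 0)) := congrArg _ hv
      _ = b := add_sub_cancel _ _
  exact ⟨(a, v), Prod.ext rfl hb⟩

section Cost

variable {n : ℕ} {c : Euc n → Euc n → ℝ} {Ω Ω' : Set (Euc n)}

theorem contDiffAt_gradx {m : WithTop ℕ∞} {z : Euc n × Euc n}
    (hc : ContDiffAt ℝ (m + 1) (fun w => c w.1 w.2) z) :
    ContDiffAt ℝ m (fun w : Euc n × Euc n => gradx c w.1 w.2) z := by
  have hswap : ContDiffAt ℝ (m + 1)
      (Function.uncurry fun (w : Euc n × Euc n) (x : Euc n) => c x w.2) (z, z.1) :=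
    hc.comp (z, z.1) (contDiffAt_snd.prodMk contDiffAt_fst.snd)
  exact (InnerProductSpace.toDual ℝ (Euc n)).symm.contDiff.contDiffAt.comp z
    (hswap.fderiv contDiffAt_fst le_rfl)

theorem map_nhds_prodMk_neg_gradx {z : Euc n × Euc n}
    (hc : ContDiffAt ℝ 2 (fun w => c w.1 w.2) z)
    (hdet : LinearMap.det ((fderiv ℝ (fun y => gradx c z.1 y) z.2 : Euc n →L[ℝ] Euc n) :
      Euc n →ₗ[ℝ] Euc n) ≠ 0) :
    map (fun w : Euc n × Euc n => (w.1, -gradx c w.1 w.2)) (𝓝 z) = 𝓝 (z.1, -gradx c z.1 z.2) := by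
  have hgrad : HasStrictFDerivAt (fun w : Euc n × Euc n => gradx c w.1 w.2) _ z :=
    (contDiffAt_gradx (m := 1) (by simpa [one_add_one_eq_two] using hc)).hasStrictFDerivAt
      one_ne_zero
  have hpartial := (hgrad.hasFDerivAt.comp (f := fun y => (z.1, y)) z.2
    (hasFDerivAt_prodMk_right z.1 z.2)).fderiv
  have hsurj : Function.Surjective (fderiv ℝ (fun y => gradx c z.1 y) z.2) :=
    (LinearMap.equivOfDetNeZero _ hdet).surjective
  refine map_nhds_prodMk_fst_of_surjective hgrad.neg fun v => ?_
  obtain ⟨u, hu⟩ := hsurj (-v)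
  exact ⟨u, neg_eq_iff_eq_neg.2 ((DFunLike.congr_fun hpartial u).symm.trans hu)⟩

theorem lowerSemicontinuousOn_cstarTransform {M : ℝ}
    (hcont : ∀ y ∈ Ω', ContinuousOn (fun x => c x y) Ω) (hbound : ∀ x ∈ Ω, ∀ y ∈ Ω', |c x y| ≤ M)
    (ψ : Euc n → ℝ) : LowerSemicontinuousOn (cstarTransform c Ω' ψ) Ω := by
  have bddAbove_iff (x : Euc n) (hx : x ∈ Ω) :
      BddAbove ((fun y => -c x y - ψ y) '' Ω') ↔ BddAbove ((fun y => -ψ y) '' Ω') := by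
    simpa only [sub_eq_add_neg] using bddAbove_image_add_iff_of_abs_le (f := fun y => -c x y)
      fun y hy => (abs_neg (c x y)).trans_le (hbound x hx y hy)
  by_cases hψ : BddAbove ((fun y => -ψ y) '' Ω')
  · have hiSup : cstarTransform c Ω' ψ = fun x => ⨆ y : Ω', (-c x y - ψ y) :=
      funext fun _ => sSup_image'
    rw [hiSup]
    refine lowerSemicontinuousOn_ciSup (fun x hx => ?_) fun y =>
      ((hcont y y.2).neg.sub continuousOn_const).lowerSemicontinuousOn
    simpa only [image_eq_range] using (bddAbove_iff x hx).2 hψ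
  -- The supremum is infinite at every point, where `sSup` takes the junk value `0`.
  · have hzero : EqOn (cstarTransform c Ω' ψ) 0 Ω := fun x hx =>
      Real.sSup_of_not_bddAbove (mt (bddAbove_iff x hx).1 hψ)
    exact (continuousOn_const.congr hzero).lowerSemicontinuousOn

theorem CondA0.contDiffAt (hA0 : CondA0 c Ω Ω') {x y : Euc n} (hx : x ∈ closure Ω)
    (hy : y ∈ closure Ω') : ContDiffAt ℝ 4 (fun w : Euc n × Euc n => c w.1 w.2) (x, y) := by
  obtain ⟨U, hU, hsub, hc⟩ := hA0
  exact hc.contDiffAt (hU.mem_nhds (hsub ⟨hx, hy⟩))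

theorem CConvexOn.lowerSemicontinuousOn {φ : Euc n → ℝ} (hφ : CConvexOn c Ω Ω' φ)
    (hA0 : CondA0 c Ω Ω') (hΩ : IsBounded Ω) (hΩ' : IsBounded Ω') :
    LowerSemicontinuousOn φ Ω := by
  obtain ⟨ψ, -, hψ⟩ := hφ
  have hc : ContinuousOn (fun w : Euc n × Euc n => c w.1 w.2) (closure Ω ×ˢ closure Ω') :=
    fun w hw => (hA0.contDiffAt hw.1 hw.2).continuousAt.continuousWithinAt
  obtain ⟨M, hM⟩ :=
    (hΩ.isCompact_closure.prod hΩ'.isCompact_closure).exists_bound_of_continuousOn hc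
  have hlsc : LowerSemicontinuousOn (cstarTransform c Ω' ψ) Ω :=
    lowerSemicontinuousOn_cstarTransform
      (fun y hy => hc.comp (Continuous.prodMk_left y).continuousOn
        fun x hx => ⟨subset_closure hx, subset_closure hy⟩)
      (fun x hx y hy => hM (x, y) ⟨subset_closure hx, subset_closure hy⟩) ψ
  exact fun x hx => (hlsc x hx).congr_of_eventuallyEq hx
    (eventually_nhdsWithin_of_forall fun x' hx' _ => by rw [hψ x' hx'])

end Cost

section Subdifferential

variable {n : ℕ} {Ω : Set (Euc n)} {φ : Euc n → ℝ} {x₀ p : Euc n}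

theorem neg_mem_subdiff_of_isLocalMinOn {h : Euc n → ℝ} {x g : Euc n} (hh : HasGradientAt h g x)
    (hmin : IsLocalMinOn (fun x' => φ x' + h x') Ω x) : -g ∈ subdiff Ω φ x := by
  intro ε hε
  have hsmall := (hasGradientAt_iff_isLittleO.1 hh).def hε
  filter_upwards [hmin, mem_nhdsWithin_of_mem_nhds hsmall] with x' hle hx'
  rw [inner_neg_left]
  linarith [(Real.le_norm_self _).trans hx']

theorem exists_mem_subdiff_of_forall_sphere {r ε : ℝ} (hr : 0 < r) (hε : 0 < ε)
    (hφ : LowerSemicontinuousOn φ (closedBall x₀ r))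
    (hsphere : ∀ x ∈ sphere x₀ r, φ x₀ + ⟪p, x - x₀⟫ < φ x + ε * r / 2) :
    ∃ x ∈ ball x₀ r, ∃ q ∈ subdiff Ω φ x, dist q p < ε := by
  set a := ε / (2 * r) with ha
  let h : Euc n → ℝ := fun x => a * ‖x - x₀‖ ^ 2 - ⟪p, x - x₀⟫
  have hgrad (x : Euc n) : HasGradientAt h ((2 * a) • (x - x₀) - p) x :=
    hasGradientAt_const_mul_norm_sub_sq_sub_inner a p x₀ x
  have hlsc : LowerSemicontinuousOn (fun x => φ x + h x) (closedBall x₀ r) :=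
    hφ.add (ContinuousOn.lowerSemicontinuousOn fun x _ =>
      (hgrad x).continuousAt.continuousWithinAt)
  have hcentre (x) (hx : x ∈ sphere x₀ r) : φ x₀ + h x₀ < φ x + h x := by
    have hpenalty : a * r ^ 2 = ε * r / 2 := by rw [ha]; field_simp
    have hx₀ : h x₀ = 0 := by simp [h]
    have hhx : h x = ε * r / 2 - ⟪p, x - x₀⟫ := by
      simp only [h, mem_sphere_iff_norm.1 hx, hpenalty]
    linarith [hsphere x hx]
  obtain ⟨x, hx, hmin⟩ := exists_isLocalMin_mem_ball_of_lowerSemicontinuousOn hr hlsc hcentre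
  refine ⟨x, hx, _, neg_mem_subdiff_of_isLocalMinOn (hgrad x) (hmin.on Ω), ?_⟩
  calc dist (-((2 * a) • (x - x₀) - p)) p = 2 * a * ‖x - x₀‖ := by
        rw [neg_sub, dist_eq_norm, sub_sub_cancel_left, norm_neg, norm_smul,
          Real.norm_of_nonneg (by positivity)]
    _ < 2 * a * r := by gcongr; exact mem_ball_iff_norm.1 hx
    _ = ε := by rw [ha]; field_simp

theorem eventually_exists_mem_subdiff_of_tendstoLocallyUniformlyOn {ι : Type*} {l : Filter ι}
    {φs : ι → Euc n → ℝ} (hΩ : IsOpen Ω) (hx₀ : x₀ ∈ Ω)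
    (hφs : ∀ k, LowerSemicontinuousOn (φs k) Ω) (hconv : TendstoLocallyUniformlyOn φs φ l Ω)
    (hp : p ∈ subdiff Ω φ x₀) {V : Set (Euc n × Euc n)} (hV : V ∈ 𝓝 (x₀, p)) :
    ∀ᶠ k in l, ∃ w ∈ V, w.2 ∈ subdiff Ω (φs k) w.1 := by
  obtain ⟨ε, hε, hεV⟩ := Metric.mem_nhds_iff.1 hV
  have hsub := hp (ε / 4) (by positivity)
  rw [hΩ.nhdsWithin_eq hx₀] at hsub
  obtain ⟨ρ, hρ, hρsub⟩ :=
    Metric.nhds_basis_closedBall.eventually_iff.1 ((hΩ.eventually_mem hx₀).and hsub)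
  set r := min ρ ε
  have hr : 0 < r := lt_min hρ hε
  have hball (x) (hx : x ∈ closedBall x₀ r) :=
    hρsub (closedBall_subset_closedBall (min_le_left ρ ε) hx)
  have hballΩ : closedBall x₀ r ⊆ Ω := fun x hx => (hball x hx).1
  have hunif := Metric.tendstoUniformlyOn_iff.1
    ((tendstoLocallyUniformlyOn_iff_forall_isCompact hΩ).1 hconv _ hballΩ
      (isCompact_closedBall x₀ r)) (ε * r / 8) (by positivity)
  filter_upwards [hunif] with k hk
  have hsphere (x) (hx : x ∈ sphere x₀ r) :
      φs k x₀ + ⟪p, x - x₀⟫ < φs k x + ε * r / 2 := by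
    have hxball := sphere_subset_closedBall hx
    have hlower := (hball x hxball).2
    rw [mem_sphere_iff_norm.1 hx] at hlower
    linarith [(abs_lt.1 (hk x hxball)).2, (abs_lt.1 (hk x₀ (mem_closedBall_self hr.le))).1]
  obtain ⟨x, hx, q, hq, hqp⟩ :=
    exists_mem_subdiff_of_forall_sphere hr hε ((hφs k).mono hballΩ) hsphere
  have hxε : dist x x₀ < ε := (mem_ball.1 hx).trans_le (min_le_right ρ ε)
  exact ⟨(x, q), hεV (max_lt hxε hqp), hq⟩

end Subdifferential

theorem stmt_8_general {n : ℕ} {Ω Ω' : Set (Euc n)} (hΩ : IsOpen Ω) (hΩ' : IsOpen Ω')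
    {c : Euc n → Euc n → ℝ} {x₀ y : Euc n} (hx₀ : x₀ ∈ Ω) (hy : y ∈ Ω')
    (hc : ContDiffAt ℝ 2 (fun w : Euc n × Euc n => c w.1 w.2) (x₀, y))
    (hdet : LinearMap.det ((fderiv ℝ (fun y' => gradx c x₀ y') y : Euc n →L[ℝ] Euc n) :
      Euc n →ₗ[ℝ] Euc n) ≠ 0)
    {φ : Euc n → ℝ} {φs : ℕ → Euc n → ℝ} (hφs : ∀ k, LowerSemicontinuousOn (φs k) Ω)
    (hconv : TendstoLocallyUniformlyOn φs φ atTop Ω) (hp : -gradx c x₀ y ∈ subdiff Ω φ x₀) :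
    ∃ xs ys : ℕ → Euc n,
      Tendsto xs atTop (𝓝 x₀) ∧ Tendsto ys atTop (𝓝 y) ∧ (∀ k, xs k ∈ Ω) ∧ (∀ k, ys k ∈ Ω') ∧
      (∀ᶠ k in atTop, -gradx c (xs k) (ys k) ∈ subdiff Ω (φs k) (xs k)) ∧
      Tendsto (fun k => -gradx c (xs k) (ys k)) atTop (𝓝 (-gradx c x₀ y)) := by
  have hmap := map_nhds_prodMk_neg_gradx hc hdet
  have hΩΩ' : Ω ×ˢ Ω' ∈ 𝓝 (x₀, y) := (hΩ.prod hΩ').mem_nhds ⟨hx₀, hy⟩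
  let S (k : ℕ) : Set (Euc n × Euc n) :=
    {w | w ∈ Ω ×ˢ Ω' ∧ -gradx c w.1 w.2 ∈ subdiff Ω (φs k) w.1}
  have exists_near (V) (hV : V ∈ 𝓝 (x₀, y)) : ∀ᶠ k in atTop, (S k ∩ V).Nonempty := by
    have himage : (fun w : Euc n × Euc n => (w.1, -gradx c w.1 w.2)) '' (Ω ×ˢ Ω' ∩ V) ∈
        𝓝 (x₀, -gradx c x₀ y) :=
      hmap ▸ image_mem_map (inter_mem hΩΩ' hV)
    filter_upwards [eventually_exists_mem_subdiff_of_tendstoLocallyUniformlyOn hΩ hx₀ hφs hconv hp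
      himage] with k ⟨_, ⟨w, ⟨hwΩ, hwV⟩, rfl⟩, hsub⟩
    exact ⟨w, ⟨hwΩ, hsub⟩, hwV⟩
  obtain ⟨w, hw, hwinsert, hwS⟩ := exists_tendsto_eventually_mem exists_near
  have insert_subset_prod (k : ℕ) : insert (x₀, y) (S k) ⊆ Ω ×ˢ Ω' :=
    insert_subset ⟨hx₀, hy⟩ fun _ h => h.1
  have hwΩ (k : ℕ) : w k ∈ Ω ×ˢ Ω' := insert_subset_prod k (hwinsert k)
  have hgrad : Tendsto (fun k => ((w k).1, -gradx c (w k).1 (w k).2)) atTop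
      (𝓝 (x₀, -gradx c x₀ y)) := Tendsto.comp hmap.le hw
  exact ⟨fun k => (w k).1, fun k => (w k).2, hw.fst_nhds, hw.snd_nhds, fun k => (hwΩ k).1,
    fun k => (hwΩ k).2, hwS.mono fun _ h => h.2, hgrad.snd_nhds⟩

/-- stability of subgradients under locally uniform convergence of c-convex
potentials. If p = −∇ₓc(x₀,y) ∈ ∂φ(x₀) and φ_k → φ uniformly on compact subsets of Ω,
then there are x_k → x₀ in Ω and y_k → y in cl(Ω') with −∇ₓc(x_k,y_k) ∈ ∂φ_k(x_k) for
large k; in particular −∇ₓc(x_k,y_k) → p. -/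
theorem stmt_8 {n : ℕ} (Ω Ω' : Set (Euc n))
    (hΩo : IsOpen Ω) (hΩb : IsBounded Ω) (hΩ'o : IsOpen Ω') (hΩ'b : IsBounded Ω')
    (c : Euc n → Euc n → ℝ)
    (hA0 : CondA0 c Ω Ω') (hA1 : CondA1 c Ω Ω') (hA2 : CondA2 c Ω Ω')
    (φ : Euc n → ℝ) (hφ : CConvexOn c Ω Ω' φ)
    (φs : ℕ → Euc n → ℝ) (hφs : ∀ k, CConvexOn c Ω Ω' (φs k))
    (hconv : ∀ K : Set (Euc n), K ⊆ Ω → IsCompact K →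
      TendstoUniformlyOn (fun k => φs k) φ atTop K)
    (x₀ : Euc n) (hx₀ : x₀ ∈ Ω) (y : Euc n) (hy : y ∈ Ω')
    (hp : -gradx c x₀ y ∈ subdiff Ω φ x₀) :
    ∃ (xs ys : ℕ → Euc n),
      Tendsto xs atTop (𝓝 x₀) ∧ Tendsto ys atTop (𝓝 y) ∧
      (∀ k, xs k ∈ Ω) ∧ (∀ k, ys k ∈ closure Ω') ∧
      (∀ᶠ k in atTop, -gradx c (xs k) (ys k) ∈ subdiff Ω (φs k) (xs k)) ∧
      Tendsto (fun k => -gradx c (xs k) (ys k)) atTop (𝓝 (-gradx c x₀ y)) := by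
  obtain ⟨xs, ys, hxs, hys, hxsΩ, hysΩ', hsub⟩ := stmt_8_general hΩo hΩ'o hx₀ hy
    ((hA0.contDiffAt (subset_closure hx₀) (subset_closure hy)).of_le (by norm_num))
    (hA2 x₀ (subset_closure hx₀) y (subset_closure hy))
    (fun k => (hφs k).lowerSemicontinuousOn hA0 hΩb hΩ'b)
    ((tendstoLocallyUniformlyOn_iff_forall_isCompact hΩo).2 hconv) hp
  exact ⟨xs, ys, hxs, hys, hxsΩ, fun k => subset_closure (hysΩ' k), hsub⟩
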